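/- arXiv:2512.13075 — 2 statements merged into one kernel-verified Lean document; each statement's English description precedes it below -/
import Mathlib

section
/- Let (Σ_k^+, d, σ) be the full one-sided shift on k symbols. Then for every α ≥ 0, h_top^{α,B}(σ, Σ_k^+) = h_top^α(σ, Σ_k^+) = (1+α)·log k, and the Hausdorff dimension satisfies dim_H(Σ_k^+, d) = log k. -/
open Filter Set MeasureTheory ENNReal
open scoped Classical NNReal

noncomputable section

namespace AlphaBS

variable {X : Type*}

/-- Birkhoff sum `S_n φ (x) = ∑_{j<n} φ(f^j x)`. -/
def birk (f : X → X) (φ : X → ℝ) (n : ℕ) (x : X) : ℝ :=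
  ∑ j ∈ Finset.range n, φ (f^[j] x)

/-- The α-Bowen ball `B_n^α(x,ε) = {y : d_n^α(x,y) < ε}`, where
`d_n^α(x,y) = max_{0 ≤ i ≤ n-1} e^{αi} d(f^i x, f^i y)`, w.r.t. an explicit distance `d`. -/
def bowenBall (d : X → X → ℝ) (f : X → X) (α : ℝ) (n : ℕ) (x : X) (ε : ℝ) : Set X :=
  {y | ∀ i < n, Real.exp (α * i) * d (f^[i] x) (f^[i] y) < ε}

section covers

variable (d : X → X → ℝ) (f : X → X)

/-- `M^α(K,s,ε,n,φ)`: infimum over countable families of α-Bowen balls covering `K`. -/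
def Mpre (φ : X → ℝ) (α s ε : ℝ) (N : ℕ) (K : Set X) : ℝ≥0∞ :=
  ⨅ (c : ℕ → X) (m : ℕ → ℕ) (I : Set ℕ) (_ : I.Nonempty) (_ : ∀ i ∈ I, N ≤ m i)
    (_ : K ⊆ ⋃ i ∈ I, bowenBall d f α (m i) (c i) ε),
    ∑' i : I, ENNReal.ofReal
      (Real.exp (-s * sSup (birk f φ (m i) '' bowenBall d f α (m i) (c i) ε)))

/-- `M^α(K,s,ε,φ) = lim_{n→∞} M^α(K,s,ε,n,φ)` (the quantity is nondecreasing in `n`). -/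
def Mlim (φ : X → ℝ) (α s ε : ℝ) (K : Set X) : ℝ≥0∞ := ⨆ N : ℕ, Mpre d f φ α s ε N K

/-- `M^α(K,ε,φ) = inf {s ≥ 0 : M^α(K,s,ε,φ) = 0}`. -/
def Mcrit (φ : X → ℝ) (α ε : ℝ) (K : Set X) : EReal :=
  ⨅ (s : ℝ) (_ : 0 ≤ s) (_ : Mlim d f φ α s ε K = 0), (s : EReal)

/-- The α-BS dimension `dim_BS^α(f,K,φ) = lim_{ε→0} M^α(K,ε,φ)`
(the quantity is nonincreasing in `ε`). -/
def dimBS (φ : X → ℝ) (α : ℝ) (K : Set X) : EReal :=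
  ⨆ (ε : ℝ) (_ : 0 < ε), Mcrit d f φ α ε K

/-- `M^{α,1}(K,s,ε,n,φ)`: the variant with weights `exp(-s·S_{n_i}φ(x_i))` at the centers. -/
def M1pre (φ : X → ℝ) (α s ε : ℝ) (N : ℕ) (K : Set X) : ℝ≥0∞ :=
  ⨅ (c : ℕ → X) (m : ℕ → ℕ) (I : Set ℕ) (_ : I.Nonempty) (_ : ∀ i ∈ I, N ≤ m i)
    (_ : K ⊆ ⋃ i ∈ I, bowenBall d f α (m i) (c i) ε),
    ∑' i : I, ENNReal.ofReal (Real.exp (-s * birk f φ (m i) (c i)))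

def M1lim (φ : X → ℝ) (α s ε : ℝ) (K : Set X) : ℝ≥0∞ := ⨆ N : ℕ, M1pre d f φ α s ε N K

def M1crit (φ : X → ℝ) (α ε : ℝ) (K : Set X) : EReal :=
  ⨅ (s : ℝ) (_ : 0 ≤ s) (_ : M1lim d f φ α s ε K = 0), (s : EReal)

/-- The modified α-BS dimension `\widetilde{dim}_{BS}^α(f,K,φ)`. -/
def dimBS1 (φ : X → ℝ) (α : ℝ) (K : Set X) : EReal :=
  ⨆ (ε : ℝ) (_ : 0 < ε), M1crit d f φ α ε K

/-- `M^α(K,s,ε,n,1)`: covering quantity with weights `exp(-s n_i)`. -/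
def Epre (α s ε : ℝ) (N : ℕ) (K : Set X) : ℝ≥0∞ :=
  ⨅ (c : ℕ → X) (m : ℕ → ℕ) (I : Set ℕ) (_ : I.Nonempty) (_ : ∀ i ∈ I, N ≤ m i)
    (_ : K ⊆ ⋃ i ∈ I, bowenBall d f α (m i) (c i) ε),
    ∑' i : I, ENNReal.ofReal (Real.exp (-s * (m i : ℝ)))

def Elim (α s ε : ℝ) (K : Set X) : ℝ≥0∞ := ⨆ N : ℕ, Epre d f α s ε N K

def Ecrit (α ε : ℝ) (K : Set X) : EReal :=
  ⨅ (s : ℝ) (_ : 0 ≤ s) (_ : Elim d f α s ε K = 0), (s : EReal)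

/-- The α-Bowen topological entropy `h_top^{α,B}(f,K)` (i.e. `dim_BS^α(f,K,1)`,
computed with weights `exp(-s n_i)`). -/
def entB (α : ℝ) (K : Set X) : EReal := ⨆ (ε : ℝ) (_ : 0 < ε), Ecrit d f α ε K

/-- `ℳ_B^α(K,s,ε,n,h)`: the Pesin pressure covering quantity. -/
def Ppre (h : X → ℝ) (α s ε : ℝ) (N : ℕ) (K : Set X) : ℝ≥0∞ :=
  ⨅ (c : ℕ → X) (m : ℕ → ℕ) (I : Set ℕ) (_ : I.Nonempty) (_ : ∀ i ∈ I, N ≤ m i)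
    (_ : K ⊆ ⋃ i ∈ I, bowenBall d f α (m i) (c i) ε),
    ∑' i : I, ENNReal.ofReal
      (Real.exp (-s * (m i : ℝ) + sSup (birk f h (m i) '' bowenBall d f α (m i) (c i) ε)))

def Plim (h : X → ℝ) (α s ε : ℝ) (K : Set X) : ℝ≥0∞ := ⨆ N : ℕ, Ppre d f h α s ε N K

/-- `ℳ_B^α(K,ε,h) = inf {s ∈ ℝ : ℳ_B^α(K,s,ε,h) = 0}`. -/
def Pcrit (h : X → ℝ) (α ε : ℝ) (K : Set X) : EReal :=
  ⨅ (s : ℝ) (_ : Plim d f h α s ε K = 0), (s : EReal)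

/-- The α-Pesin topological pressure `P_B^α(f,K,h)`. -/
def pressureB (h : X → ℝ) (α : ℝ) (K : Set X) : EReal :=
  ⨆ (ε : ℝ) (_ : 0 < ε), Pcrit d f h α ε K

/-- `W^α(K,s,ε,n,φ)`: the weighted covering quantity. -/
def Wpre (φ : X → ℝ) (α s ε : ℝ) (N : ℕ) (K : Set X) : ℝ≥0∞ :=
  ⨅ (c : ℕ → X) (m : ℕ → ℕ) (w : ℕ → ℝ) (I : Set ℕ) (_ : I.Nonempty)
    (_ : ∀ i ∈ I, N ≤ m i) (_ : ∀ i ∈ I, 0 < w i)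
    (_ : ∀ x ∈ K, (1 : ℝ≥0∞) ≤
      ∑' i : I, (bowenBall d f α (m i) (c i) ε).indicator
        (fun _ => ENNReal.ofReal (w i)) x),
    ∑' i : I, ENNReal.ofReal (w i * Real.exp (-s * birk f φ (m i) (c i)))

def Wlim (φ : X → ℝ) (α s ε : ℝ) (K : Set X) : ℝ≥0∞ := ⨆ N : ℕ, Wpre d f φ α s ε N K

def Wcrit (φ : X → ℝ) (α ε : ℝ) (K : Set X) : EReal :=
  ⨅ (s : ℝ) (_ : 0 ≤ s) (_ : Wlim d f φ α s ε K = 0), (s : EReal)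

/-- The weighted α-BS dimension `dim_BS^{α,W}(f,K,φ)`. -/
def dimBSW (φ : X → ℝ) (α : ℝ) (K : Set X) : EReal :=
  ⨆ (ε : ℝ) (_ : 0 < ε), Wcrit d f φ α ε K

/-- `r_n(f,α,X,ε)`: the smallest cardinality of an `(n,α,ε)`-spanning set of `X`. -/
def spanNum (α ε : ℝ) (n : ℕ) : ℕ :=
  sInf {m : ℕ | ∃ E : Finset X, E.card = m ∧
    ∀ x : X, ∃ y ∈ E, ∀ i < n, Real.exp (α * i) * d (f^[i] y) (f^[i] x) < ε}

/-- `h_top^α(f,X,ε) = limsup_n (1/n) log r_n(f,α,X,ε)`. -/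
def htopSpanE (α ε : ℝ) : EReal :=
  limsup (fun n : ℕ => ((Real.log (spanNum d f α ε n) / n : ℝ) : EReal)) atTop

/-- the α-topological entropy `h_top^α(f,X) = lim_{ε→0} h_top^α(f,X,ε)`
(the quantity is nonincreasing in `ε`). -/
def htopSpan (α : ℝ) : EReal := ⨆ (ε : ℝ) (_ : 0 < ε), htopSpanE d f α ε

/-- `r_n(X, e^{-nε})`: smallest number of ε-neutralized Bowen balls needed to cover `X`. -/
def neutNum (ε : ℝ) (n : ℕ) : ℕ :=
  sInf {m : ℕ | ∃ E : Finset X, E.card = m ∧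
    ∀ x : X, ∃ y ∈ E, ∀ j < n, d (f^[j] y) (f^[j] x) < Real.exp (-(n : ℝ) * ε)}

/-- the neutralized ε-topological entropy. -/
def neutEntE (ε : ℝ) : EReal :=
  limsup (fun n : ℕ => ((Real.log (neutNum d f ε n) / n : ℝ) : EReal)) atTop

/-- the neutralized topological entropy `\tilde h_top(f,X) = inf_{ε>0} \tilde h_top(f,X,ε)`. -/
def neutEnt : EReal := ⨅ (ε : ℝ) (_ : 0 < ε), neutEntE d f ε

end covers

/-- `-log t`, valued in `[0,∞]` for `t ∈ [0,1]`, with `-log 0 = ∞`. -/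
def negLog (t : ℝ≥0∞) : ℝ≥0∞ := if t = 0 then ⊤ else ENNReal.ofReal (-Real.log t.toReal)

section measure

variable [MeasurableSpace X]

/-- `P_μ^α(f,x,φ) = lim_{ε→0} liminf_n (-log μ(B_n^α(x,ε)))/S_nφ(x)`. -/
def localBKphi (d : X → X → ℝ) (f : X → X) (φ : X → ℝ) (α : ℝ) (μ : Measure X)
    (x : X) : ℝ≥0∞ :=
  ⨆ (ε : ℝ) (_ : 0 < ε),
    liminf (fun n : ℕ =>
      negLog (μ (bowenBall d f α n x ε)) / ENNReal.ofReal (birk f φ n x)) atTop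

/-- The α-local Brin–Katok entropy `P_μ^α(f,φ) = ∫ P_μ^α(f,x,φ) dμ(x)`. -/
def BKphi (d : X → X → ℝ) (f : X → X) (φ : X → ℝ) (α : ℝ) (μ : Measure X) : ℝ≥0∞ :=
  ∫⁻ x, localBKphi d f φ α μ x ∂μ

/-- `lim_{ε→0} liminf_n (-log μ(B_n^α(x,ε)))/n`. -/
def localBKn (d : X → X → ℝ) (f : X → X) (α : ℝ) (μ : Measure X) (x : X) : ℝ≥0∞ :=
  ⨆ (ε : ℝ) (_ : 0 < ε),
    liminf (fun n : ℕ => negLog (μ (bowenBall d f α n x ε)) / (n : ℝ≥0∞)) atTop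

/-- The lower α-local Brin–Katok entropy `\underline h_μ^{BK}(f,α)`. -/
def BKn (d : X → X → ℝ) (f : X → X) (α : ℝ) (μ : Measure X) : ℝ≥0∞ :=
  ∫⁻ x, localBKn d f α μ x ∂μ

end measure

/-- diameter of a set w.r.t. an explicit distance. -/
def ediamD (d : X → X → ℝ) (U : Set X) : ℝ≥0∞ :=
  ⨆ (x ∈ U) (y ∈ U), ENNReal.ofReal (d x y)

/-- pre-Hausdorff measure at scale `δ`. -/
def hausPre (d : X → X → ℝ) (s δ : ℝ) (E : Set X) : ℝ≥0∞ :=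
  ⨅ (U : ℕ → Set X) (_ : E ⊆ ⋃ i, U i) (_ : ∀ i, ediamD d (U i) ≤ ENNReal.ofReal δ),
    ∑' i, ediamD d (U i) ^ s

/-- `s`-dimensional Hausdorff measure w.r.t. an explicit distance. -/
def hausMeas (d : X → X → ℝ) (s : ℝ) (E : Set X) : ℝ≥0∞ :=
  ⨆ (δ : ℝ) (_ : 0 < δ), hausPre d s δ E

/-- Hausdorff dimension w.r.t. an explicit distance:
`dim_H(E,d) = inf {s ≥ 0 : H^s(E) = 0}`. -/
def hausDim (d : X → X → ℝ) (E : Set X) : ℝ≥0∞ :=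
  ⨅ (s : ℝ≥0) (_ : hausMeas d s E = 0), (s : ℝ≥0∞)

/-- The left shift on `Σ_k^+ = {0,…,k-1}^ℕ`. -/
def shiftMap (k : ℕ) : (ℕ → Fin k) → (ℕ → Fin k) := fun x n => x (n + 1)

/-- The metric `d(x,y) = e^{-n(x,y)}` on `Σ_k^+`, where `n(x,y)` is the least index
at which `x` and `y` differ, and `d(x,x) = 0`. -/
def shiftDist {k : ℕ} (x y : ℕ → Fin k) : ℝ :=
  if x = y then 0 else Real.exp (-((sInf {n : ℕ | x n ≠ y n} : ℕ) : ℝ))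

/-- The subshift of finite type `Σ_A^+` determined by the incidence matrix `A`. -/
def SFT {k : ℕ} (A : Matrix (Fin k) (Fin k) ℝ) : Type :=
  {x : ℕ → Fin k // ∀ n, A (x n) (x (n + 1)) = 1}

/-- The left shift restricted to `Σ_A^+`. -/
def sftShift {k : ℕ} (A : Matrix (Fin k) (Fin k) ℝ) : SFT A → SFT A :=
  fun x => ⟨fun n => x.1 (n + 1), fun n => x.2 (n + 1)⟩

/-- The metric `d` restricted to `Σ_A^+`. -/
def sftDist {k : ℕ} (A : Matrix (Fin k) (Fin k) ℝ) : SFT A → SFT A → ℝ :=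
  fun x y => shiftDist x.1 y.1

end AlphaBS

open AlphaBS

namespace AlphaBS

lemma dist_ge {k : ℕ} {x y : ℕ → Fin k} {j : ℕ} (h : x j ≠ y j) :
    Real.exp (-(j : ℝ)) ≤ shiftDist x y := by
  have hne : x ≠ y := fun e => h (by rw [e])
  rw [shiftDist, if_neg hne]
  apply Real.exp_le_exp.2
  have : sInf {n : ℕ | x n ≠ y n} ≤ j := Nat.sInf_le h
  have : ((sInf {n : ℕ | x n ≠ y n} : ℕ) : ℝ) ≤ j := by exact_mod_cast this
  linarith

lemma dist_le {k : ℕ} {x y : ℕ → Fin k} {n : ℕ} (h : ∀ j < n, x j = y j) :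
    shiftDist x y ≤ Real.exp (-(n : ℝ)) := by
  rw [shiftDist]
  split_ifs with hne
  · positivity
  apply Real.exp_le_exp.2
  obtain ⟨j, hj⟩ := Function.ne_iff.1 hne
  have hmem : sInf {n : ℕ | x n ≠ y n} ∈ {n : ℕ | x n ≠ y n} := Nat.sInf_mem ⟨j, hj⟩
  have : n ≤ sInf {n : ℕ | x n ≠ y n} := by
    by_contra hlt
    exact hmem (h _ (not_le.1 hlt))
  have : (n : ℝ) ≤ ((sInf {n : ℕ | x n ≠ y n} : ℕ) : ℝ) := by exact_mod_cast this
  linarith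

lemma dist_le_one {k : ℕ} (x y : ℕ → Fin k) : shiftDist x y ≤ 1 := by
  simpa using dist_le (x := x) (y := y) (n := 0) (by simp)

lemma iter_shift (k i : ℕ) (x : ℕ → Fin k) (j : ℕ) : (shiftMap k)^[i] x j = x (i + j) := by
  induction i generalizing x with
  | zero => simp
  | succ i ih =>
    rw [Function.iterate_succ_apply, ih]
    simp only [shiftMap]
    congr 1
    omega

def cyl {k : ℕ} (x : ℕ → Fin k) (n : ℕ) : Set (ℕ → Fin k) := {y | ∀ j < n, x j = y j}

lemma exists_meas (k : ℕ) (hk : 0 < k) : ∃ μ : Measure (ℕ → Fin k), μ univ = 1 ∧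
    ∀ x n, μ (cyl x n) ≤ ENNReal.ofReal (Real.exp (-(n * Real.log k))) := by
  have : Nonempty (Fin k) := ⟨⟨0, hk⟩⟩
  have : IsProbabilityMeasure (ProbabilityTheory.uniformOn (univ : Set (Fin k))) :=
    inferInstance
  refine ⟨Measure.infinitePi (fun _ : ℕ => ProbabilityTheory.uniformOn (univ : Set (Fin k))),
    measure_univ, fun x n => ?_⟩
  have : cyl x n = Set.pi (Finset.range n : Set ℕ) (fun j => {x j}) := by
    ext y
    simp [cyl, Set.mem_pi, eq_comm]
  rw [this, Measure.infinitePi_pi _ (fun i _ => measurableSet_singleton _)]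
  have h1 : ∀ a : Fin k, ProbabilityTheory.uniformOn (univ : Set (Fin k)) {a}
      = ENNReal.ofReal (Real.exp (-Real.log k)) := by
    intro a
    rw [ProbabilityTheory.uniformOn_univ, Real.exp_neg, Real.exp_log (by exact_mod_cast hk),
      ENNReal.ofReal_inv_of_pos (by exact_mod_cast hk)]
    simp
  simp only [h1]
  rw [Finset.prod_const, Finset.card_range, ← ENNReal.ofReal_pow (Real.exp_pos _).le,
    ← Real.exp_nat_mul]
  apply le_of_eq
  congr 2
  ring

lemma ball_sub {k : ℕ} {α : ℝ} (hα : 0 ≤ α) (n : ℕ) (x : ℕ → Fin k) :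
    bowenBall shiftDist (shiftMap k) α n x 1 ⊆ cyl x ⌊(1 + α) * n - α⌋₊ := by
  intro y hy j hj
  have hj' : ((j + 1 : ℕ) : ℝ) ≤ (1 + α) * n - α :=
    (Nat.le_floor_iff' (Nat.succ_ne_zero j)).1 hj
  push_cast at hj'
  -- general extraction
  have key : ∀ i < n, ∀ l : ℕ, (l : ℝ) ≤ α * i → x (i + l) = y (i + l) := by
    intro i hi l hl
    by_contra hne
    have h1 := hy i hi
    have h2 : Real.exp (-(l : ℝ)) ≤ shiftDist ((shiftMap k)^[i] x) ((shiftMap k)^[i] y) := by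
      apply dist_ge
      rwa [iter_shift, iter_shift]
    have h3 : 1 ≤ Real.exp (α * i) * Real.exp (-(l : ℝ)) := by
      rw [← Real.exp_add]
      apply Real.one_le_exp
      linarith
    have h4 := mul_le_mul_of_nonneg_left h2 (Real.exp_pos (α * i)).le
    linarith
  by_cases hjn : j < n
  · have := key j hjn 0 (by simp; positivity)
    simpa using this
  · rcases n with _ | n
    · simp at hj'
      have : (0 : ℝ) ≤ j := by positivity
      linarith
    · push Not at hjn
      obtain ⟨l, rfl⟩ : ∃ l, j = n + l := ⟨j - n, by omega⟩
      apply key n (by omega)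
      push_cast at hj'
      nlinarith

lemma ball_meas {k : ℕ} {α : ℝ} (hα : 0 ≤ α) {μ : Measure (ℕ → Fin k)}
    (hμ : ∀ x n, μ (cyl x n) ≤ ENNReal.ofReal (Real.exp (-(n * Real.log k))))
    (n : ℕ) (x : ℕ → Fin k) :
    μ (bowenBall shiftDist (shiftMap k) α n x 1) ≤
      ENNReal.ofReal (Real.exp (-(((1 + α) * n - α - 1) * Real.log k))) := by
  refine (measure_mono (ball_sub hα n x)).trans ((hμ _ _).trans ?_)
  apply ENNReal.ofReal_le_ofReal
  apply Real.exp_le_exp.2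
  have h1 := (Nat.lt_floor_add_one ((1 + α) * n - α)).le
  have h2 : 0 ≤ Real.log k := Real.log_natCast_nonneg k
  have := mul_le_mul_of_nonneg_right (sub_le_iff_le_add.2 h1) h2
  linarith

/-- cylinders inside Bowen balls -/
lemma cyl_sub {k : ℕ} {α : ℝ} (hα : 0 ≤ α) {ε : ℝ} {c : ℕ} (hc : Real.exp (-(c : ℝ)) < ε)
    (n : ℕ) (x : ℕ → Fin k) :
    cyl x (n + ⌈α * n⌉₊ + c) ⊆ bowenBall shiftDist (shiftMap k) α n x ε := by
  intro y hy i hi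
  have h1 : shiftDist ((shiftMap k)^[i] x) ((shiftMap k)^[i] y) ≤
      Real.exp (-((n + ⌈α * n⌉₊ + c - i : ℕ) : ℝ)) := by
    apply dist_le
    intro j hj
    rw [iter_shift, iter_shift]
    exact hy _ (by omega)
  refine lt_of_le_of_lt (mul_le_mul_of_nonneg_left h1 (Real.exp_pos _).le) ?_
  refine lt_of_le_of_lt ?_ hc
  rw [← Real.exp_add]
  apply Real.exp_le_exp.2
  have hle : i ≤ n + ⌈α * n⌉₊ + c := by omega
  push_cast [Nat.cast_sub hle]
  have h2 := Nat.le_ceil (α * n)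
  have h3 : (i : ℝ) ≤ n := by exact_mod_cast hi.le
  nlinarith

/-- representative of a word -/
def rep {k : ℕ} (hk : 0 < k) (L : ℕ) (w : Fin L → Fin k) : ℕ → Fin k :=
  fun j => if h : j < L then w ⟨j, h⟩ else ⟨0, hk⟩

lemma mem_rep {k : ℕ} (hk : 0 < k) (L : ℕ) (y : ℕ → Fin k) :
    y ∈ cyl (rep hk L (fun j => y j)) L := by
  intro j hj
  simp [rep, hj]

lemma symm_cyl {k : ℕ} {x y : ℕ → Fin k} {n : ℕ} (h : y ∈ cyl x n) : x ∈ cyl y n :=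
  fun j hj => (h j hj).symm

lemma pow_bound {k : ℕ} (hk : 0 < k) {α : ℝ} (hα : 0 ≤ α) (n c : ℕ) :
    ((k ^ (n + ⌈α * n⌉₊ + c) : ℕ) : ℝ) ≤
      Real.exp (((1 + α) * n + (c + 1)) * Real.log k) := by
  have hk' : (0 : ℝ) < k := by exact_mod_cast hk
  push_cast
  rw [← Real.rpow_natCast, Real.rpow_def_of_pos hk', mul_comm]
  apply Real.exp_le_exp.2
  apply mul_le_mul_of_nonneg_right _ (Real.log_natCast_nonneg k)
  have := (Nat.ceil_lt_add_one (show 0 ≤ α * n by positivity)).le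
  push_cast
  linarith

lemma exists_c {ε : ℝ} (hε : 0 < ε) : ∃ c : ℕ, Real.exp (-(c : ℝ)) < ε := by
  obtain ⟨c, hc⟩ := exists_nat_gt (-Real.log ε)
  refine ⟨c, ?_⟩
  rw [← Real.lt_log_iff_exp_lt hε]
  linarith

lemma Epre_le {k : ℕ} (hk : 0 < k) {α : ℝ} (hα : 0 ≤ α) {ε : ℝ} {c : ℕ}
    (hc : Real.exp (-(c : ℝ)) < ε) (s : ℝ) (N n : ℕ) (hn : N ≤ n) :
    Epre shiftDist (shiftMap k) α s ε N univ ≤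
      ENNReal.ofReal (Real.exp (((1 + α) * n + (c + 1)) * Real.log k - s * n)) := by
  set L := n + ⌈α * n⌉₊ + c with hL
  have : Encodable (Fin L → Fin k) := Encodable.ofCountable _
  have : Nonempty (Fin k) := ⟨⟨0, hk⟩⟩
  let w0 : Fin L → Fin k := fun _ => ⟨0, hk⟩
  let C : ℕ → (ℕ → Fin k) := fun i => rep hk L ((Encodable.decode (α := Fin L → Fin k) i).getD w0)
  have hcov : (univ : Set (ℕ → Fin k)) ⊆ ⋃ i ∈ range (Encodable.encode (α := Fin L → Fin k)),
      bowenBall shiftDist (shiftMap k) α n (C i) ε := by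
    intro y _
    simp only [mem_iUnion]
    refine ⟨Encodable.encode (fun j : Fin L => y j), ⟨_, rfl⟩, ?_⟩
    apply cyl_sub hα hc
    simp only [C, Encodable.encodek, Option.getD_some]
    exact mem_rep hk L y
  unfold Epre
  refine iInf_le_of_le C ?_
  refine iInf_le_of_le (fun _ => n) ?_
  refine iInf_le_of_le (range (Encodable.encode (α := Fin L → Fin k))) ?_
  refine iInf_le_of_le ⟨_, w0, rfl⟩ ?_
  refine iInf_le_of_le (fun _ _ => hn) ?_
  refine iInf_le_of_le hcov ?_
  rw [← (Equiv.ofInjective _ (Encodable.encode_injective (α := Fin L → Fin k))).tsum_eq]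
  rw [tsum_fintype]
  simp only [Finset.sum_const, Finset.card_univ, Fintype.card_fun, Fintype.card_fin, nsmul_eq_mul]
  rw [← ENNReal.ofReal_natCast, ← ENNReal.ofReal_mul (by positivity)]
  apply ENNReal.ofReal_le_ofReal
  rw [sub_eq_add_neg, Real.exp_add, neg_mul]
  exact mul_le_mul_of_nonneg_right (pow_bound hk hα n c) (Real.exp_pos _).le

lemma tendsto_aux (a b : ℝ) (hb : b < 0) :
    Tendsto (fun n : ℕ => ENNReal.ofReal (Real.exp (a + b * n))) atTop (nhds 0) := by
  rw [← ENNReal.ofReal_zero]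
  apply ENNReal.tendsto_ofReal
  apply Real.tendsto_exp_atBot.comp
  apply tendsto_atBot_add_const_left
  exact tendsto_natCast_atTop_atTop.const_mul_atTop_of_neg hb

lemma ereal_le_of_lt {x : EReal} {a : ℝ} (h : ∀ s : ℝ, a < s → x ≤ s) : x ≤ a :=
  EReal.le_of_forall_lt_iff_le.1 (fun z hz => h z (by exact_mod_cast hz))

lemma entB_eq (k : ℕ) (hk : 0 < k) (α : ℝ) (hα : 0 ≤ α) :
    entB (shiftDist (k := k)) (shiftMap k) α (Set.univ : Set (ℕ → Fin k)) =
        (((1 + α) * Real.log k : ℝ) : EReal) := by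
  have hlog : 0 ≤ Real.log k := Real.log_natCast_nonneg k
  apply le_antisymm
  · refine iSup₂_le fun ε hε => ?_
    obtain ⟨c, hc⟩ := exists_c hε
    apply ereal_le_of_lt
    intro s hs
    have hs0 : 0 ≤ s := le_trans (by positivity) hs.le
    refine iInf_le_of_le s (iInf_le_of_le hs0 (iInf_le_of_le ?_ le_rfl))
    rw [Elim]
    refine le_antisymm (iSup_le fun N => ?_) bot_le
    have ht := tendsto_aux ((c + 1) * Real.log k) ((1 + α) * Real.log k - s) (by linarith)
    apply ge_of_tendsto ht
    filter_upwards [eventually_ge_atTop N] with n hn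
    refine (Epre_le hk hα hc s N n hn).trans (le_of_eq ?_)
    congr 2
    ring
  · refine le_iSup₂_of_le (1 : ℝ) one_pos ?_
    refine le_iInf fun s => le_iInf fun hs0 => le_iInf fun h => ?_
    by_contra hlt
    have hlt : s < (1 + α) * Real.log k := by exact_mod_cast not_le.1 hlt
    obtain ⟨μ, hμ1, hμ⟩ := exists_meas k hk
    set A := ENNReal.ofReal (Real.exp ((α + 1) * Real.log k)) with hA
    have hbound : 1 ≤ A * Epre shiftDist (shiftMap k) α s 1 0 univ := by
      have hA0 : A ≠ 0 := by
        rw [hA]; simp [Real.exp_pos]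
      have hAt : A ≠ ⊤ := ENNReal.ofReal_ne_top
      rw [mul_comm, ← ENNReal.div_le_iff hA0 hAt]
      refine le_iInf fun C => le_iInf fun m => le_iInf fun I => le_iInf fun _ => le_iInf fun _ =>
        le_iInf fun hcov => ?_
      rw [ENNReal.div_le_iff hA0 hAt, mul_comm, ← ENNReal.tsum_mul_left, ← hμ1]
      refine (measure_mono hcov).trans ((measure_biUnion_le μ (to_countable I) _).trans ?_)
      refine ENNReal.tsum_le_tsum fun i => ?_
      refine (ball_meas hα hμ _ _).trans ?_
      rw [hA, ← ENNReal.ofReal_mul (Real.exp_pos _).le, ← Real.exp_add]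
      apply ENNReal.ofReal_le_ofReal
      apply Real.exp_le_exp.2
      have := mul_le_mul_of_nonneg_right hlt.le (Nat.cast_nonneg (α := ℝ) (m i))
      linarith
    have h0 : Epre shiftDist (shiftMap k) α s 1 0 univ = 0 := by
      refine le_antisymm ?_ bot_le
      rw [← h]
      exact le_iSup (fun N => Epre shiftDist (shiftMap k) α s 1 N univ) 0
    rw [h0] at hbound
    simp at hbound

lemma span_mem {k : ℕ} (hk : 0 < k) {α : ℝ} (hα : 0 ≤ α) {ε : ℝ} {c : ℕ}
    (hc : Real.exp (-(c : ℝ)) < ε) (n : ℕ) :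
    ∃ E : Finset (ℕ → Fin k), E.card ≤ k ^ (n + ⌈α * n⌉₊ + c) ∧
    ∀ x, ∃ y ∈ E, ∀ i < n,
      Real.exp (α * i) * shiftDist ((shiftMap k)^[i] y) ((shiftMap k)^[i] x) < ε := by
  set L := n + ⌈α * n⌉₊ + c with hL
  refine ⟨Finset.univ.image (rep hk L), ?_, fun x => ?_⟩
  · refine Finset.card_image_le.trans ?_
    simp
  · refine ⟨rep hk L (fun j => x j), Finset.mem_image_of_mem _ (Finset.mem_univ _), ?_⟩
    exact cyl_sub hα hc n _ (mem_rep hk L x)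

lemma span_card {k : ℕ} (hk : 0 < k) {α : ℝ} (hα : 0 ≤ α) (n : ℕ) (E : Finset (ℕ → Fin k))
    (hE : ∀ x, ∃ y ∈ E, ∀ i < n,
      Real.exp (α * i) * shiftDist ((shiftMap k)^[i] y) ((shiftMap k)^[i] x) < 1) :
    Real.exp (((1 + α) * n - α - 1) * Real.log k) ≤ E.card := by
  obtain ⟨μ, hμ1, hμ⟩ := exists_meas k hk
  have hcov : (univ : Set (ℕ → Fin k)) ⊆ ⋃ y ∈ E, bowenBall shiftDist (shiftMap k) α n y 1 := by
    intro x _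
    obtain ⟨y, hy, h⟩ := hE x
    simp only [mem_iUnion]
    exact ⟨y, hy, h⟩
  have h1 : (1 : ℝ≥0∞) ≤ ENNReal.ofReal
      (E.card * Real.exp (-(((1 + α) * n - α - 1) * Real.log k))) := by
    rw [← hμ1]
    refine (measure_mono hcov).trans ((measure_biUnion_finset_le E _).trans ?_)
    refine (Finset.sum_le_sum fun y _ => ball_meas hα hμ n y).trans (le_of_eq ?_)
    rw [Finset.sum_const, nsmul_eq_mul, ENNReal.ofReal_mul (by positivity), ENNReal.ofReal_natCast]
  rw [ENNReal.one_le_ofReal, Real.exp_neg, ← div_eq_mul_inv, one_le_div (Real.exp_pos _)] at h1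
  exact h1

lemma htop_eq (k : ℕ) (hk : 0 < k) (α : ℝ) (hα : 0 ≤ α) :
    htopSpan (shiftDist (k := k)) (shiftMap k) α = (((1 + α) * Real.log k : ℝ) : EReal) := by
  have hlim : ∀ a : ℝ, Tendsto (fun n : ℕ => (((((1 + α) * n + a) * Real.log k) / n : ℝ) : EReal))
      atTop (nhds (((1 + α) * Real.log k : ℝ) : EReal)) := by
    intro a
    apply (continuous_coe_real_ereal.tendsto _).comp
    have h1 : Tendsto (fun n : ℕ => (1 + α) * Real.log k + (a * Real.log k) / (n : ℝ)) atTop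
        (nhds ((1 + α) * Real.log k + 0)) :=
      tendsto_const_nhds.add (tendsto_const_div_atTop_nhds_zero_nat _)
    rw [add_zero] at h1
    refine h1.congr' ?_
    filter_upwards [eventually_gt_atTop 0] with n hn
    have : (n : ℝ) ≠ 0 := by positivity
    field_simp
  have hlow : ∀ n : ℕ, Real.exp (((1 + α) * n - α - 1) * Real.log k) ≤
      spanNum (shiftDist (k := k)) (shiftMap k) α 1 n := by
    intro n
    obtain ⟨c, hc⟩ := exists_c one_pos
    obtain ⟨E, -, hE⟩ := span_mem hk hα hc n
    obtain ⟨E', hc', hE'⟩ := Nat.sInf_mem (s := {m : ℕ | ∃ E : Finset (ℕ → Fin k), E.card = m ∧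
      ∀ x, ∃ y ∈ E, ∀ i < n,
      Real.exp (α * i) * shiftDist ((shiftMap k)^[i] y) ((shiftMap k)^[i] x) < 1})
      ⟨_, E, rfl, hE⟩
    have := span_card hk hα n E' hE'
    rw [hc'] at this
    exact this
  apply le_antisymm
  · refine iSup₂_le fun ε hε => ?_
    obtain ⟨c, hc⟩ := exists_c hε
    rw [← (hlim (c + 1)).limsup_eq]
    refine limsup_le_limsup (Eventually.of_forall fun n => ?_)
    apply EReal.coe_le_coe_iff.2
    apply div_le_div_of_nonneg_right _ (Nat.cast_nonneg n)
    have h1 : spanNum (shiftDist (k := k)) (shiftMap k) α ε n ≤ k ^ (n + ⌈α * n⌉₊ + c) := by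
      obtain ⟨E, hEc, hE⟩ := span_mem hk hα hc n
      refine le_trans ?_ hEc
      unfold spanNum
      exact Nat.sInf_le ⟨E, rfl, hE⟩
    rcases Nat.eq_zero_or_pos (spanNum (shiftDist (k := k)) (shiftMap k) α ε n) with h0 | h0
    · rw [h0]
      simp only [Nat.cast_zero, Real.log_zero]
      have := Real.log_natCast_nonneg k
      positivity
    · rw [Real.log_le_iff_le_exp (by exact_mod_cast h0)]
      refine le_trans ?_ (pow_bound hk hα n c)
      exact_mod_cast h1
  · refine le_iSup₂_of_le (1 : ℝ) one_pos ?_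
    rw [← (hlim (-α - 1)).limsup_eq]
    refine limsup_le_limsup (Eventually.of_forall fun n => ?_)
    apply EReal.coe_le_coe_iff.2
    apply div_le_div_of_nonneg_right _ (Nat.cast_nonneg n)
    have h := hlow n
    rw [Real.le_log_iff_exp_le (lt_of_lt_of_le (Real.exp_pos _) h)]
    refine le_trans (le_of_eq ?_) h
    congr 1
    ring

lemma ediam_cyl {k : ℕ} (x : ℕ → Fin k) (n : ℕ) :
    ediamD shiftDist (cyl x n) ≤ ENNReal.ofReal (Real.exp (-(n : ℝ))) := by
  refine iSup₂_le fun y hy => iSup₂_le fun z hz => ?_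
  apply ENNReal.ofReal_le_ofReal
  apply dist_le
  intro j hj
  rw [← hy j hj, hz j hj]

lemma sub_cyl {k : ℕ} {U : Set (ℕ → Fin k)} {x : ℕ → Fin k} (hx : x ∈ U) {n : ℕ}
    (h : ediamD shiftDist U < ENNReal.ofReal (Real.exp (-(n : ℝ)))) : U ⊆ cyl x (n + 1) := by
  intro y hy j hj
  by_contra hne
  have h1 : ENNReal.ofReal (shiftDist x y) ≤ ediamD shiftDist U :=
    le_iSup₂_of_le x hx (le_iSup₂_of_le (f := fun y _ => ENNReal.ofReal (shiftDist x y)) y hy le_rfl)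
  have h2 := ENNReal.ofReal_le_ofReal (dist_ge hne)
  have h3 : ENNReal.ofReal (Real.exp (-(n : ℝ))) ≤ ENNReal.ofReal (Real.exp (-(j : ℝ))) := by
    apply ENNReal.ofReal_le_ofReal
    apply Real.exp_le_exp.2
    have : (j : ℝ) ≤ n := by exact_mod_cast Nat.lt_succ_iff.1 hj
    linarith
  exact absurd (h.trans_le (h3.trans (h2.trans h1))) (lt_irrefl _)

lemma meas_le_diam {k : ℕ} (hk : 2 ≤ k) {μ : Measure (ℕ → Fin k)} (hμ1 : μ univ = 1)
    (hμ : ∀ x n, μ (cyl x n) ≤ ENNReal.ofReal (Real.exp (-(n * Real.log k))))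
    (U : Set (ℕ → Fin k)) :
    μ U ≤ ENNReal.ofReal (Real.exp (Real.log k)) * ediamD shiftDist U ^ Real.log k := by
  have hlog : 0 < Real.log k := Real.log_pos (by exact_mod_cast hk)
  rcases U.eq_empty_or_nonempty with rfl | ⟨x, hx⟩
  · simp
  by_cases hex : ∃ n : ℕ, ENNReal.ofReal (Real.exp (-(n : ℝ))) ≤ ediamD shiftDist U
  · have hn := Nat.find_spec hex
    set n := Nat.find hex with hndef
    have hU : μ U ≤ ENNReal.ofReal (Real.exp (-(n * Real.log k))) := by
      rcases Nat.eq_zero_or_pos n with h0 | h0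
      · rw [h0]
        simpa [hμ1] using measure_mono (μ := μ) (subset_univ U)
      · have h1 : ¬ _ := Nat.find_min hex (m := n - 1) (by omega)
        have h2 := sub_cyl hx (not_le.1 h1)
        rw [Nat.sub_add_cancel h0] at h2
        exact (measure_mono h2).trans (hμ x n)
    have h3 : ENNReal.ofReal (Real.exp (-(n * Real.log k))) ≤ ediamD shiftDist U ^ Real.log k := by
      refine le_trans (le_of_eq ?_) (ENNReal.rpow_le_rpow hn hlog.le)
      rw [ENNReal.ofReal_rpow_of_pos (Real.exp_pos _), ← Real.exp_mul]
      congr 2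
      ring
    refine (hU.trans h3).trans (le_mul_of_one_le_left bot_le ?_)
    rw [ENNReal.one_le_ofReal]
    exact Real.one_le_exp hlog.le
  · push Not at hex
    have : μ U ≤ 0 := by
      apply ge_of_tendsto (tendsto_aux 0 (-Real.log k) (by linarith))
      refine Eventually.of_forall fun n => ?_
      have hsub : U ⊆ cyl x n := fun y hy j hj => sub_cyl hx (hex n) hy j (by omega)
      refine (measure_mono hsub).trans ((hμ x n).trans (le_of_eq ?_))
      congr 2
      ring
    exact this.trans bot_le

lemma hausPre_le {k : ℕ} (hk : 0 < k) {s : ℝ} (hs : 0 < s) {δ : ℝ} {n : ℕ}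
    (hn : Real.exp (-(n : ℝ)) ≤ δ) :
    hausPre shiftDist s δ (univ : Set (ℕ → Fin k)) ≤
      ENNReal.ofReal (Real.exp (n * Real.log k - s * n)) := by
  have : Encodable (Fin n → Fin k) := Encodable.ofCountable _
  let U : ℕ → Set (ℕ → Fin k) := fun i =>
    (Encodable.decode₂ (Fin n → Fin k) i).elim ∅ (fun w => cyl (rep hk n w) n)
  have hempty : ediamD shiftDist (∅ : Set (ℕ → Fin k)) = 0 := by simp [ediamD]
  have hUe : ∀ w : Fin n → Fin k, U (Encodable.encode w) = cyl (rep hk n w) n := by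
    intro w
    simp [U, Encodable.encodek₂]
  have hcov : (univ : Set (ℕ → Fin k)) ⊆ ⋃ i, U i := by
    intro y _
    simp only [mem_iUnion]
    refine ⟨Encodable.encode (fun j : Fin n => y j), ?_⟩
    rw [hUe]
    exact mem_rep hk n y
  have hnone : ∀ i, i ∉ range (Encodable.encode (α := Fin n → Fin k)) → U i = ∅ := by
    intro i hi
    have : Encodable.decode₂ (Fin n → Fin k) i = none := by
      by_contra h
      obtain ⟨w, hw⟩ := Option.ne_none_iff_exists'.1 h
      exact hi ⟨w, Encodable.mem_decode₂.1 hw⟩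
    simp [U, this]
  have hdiam : ∀ i, ediamD shiftDist (U i) ≤ ENNReal.ofReal δ := by
    intro i
    by_cases hi : i ∈ range (Encodable.encode (α := Fin n → Fin k))
    · obtain ⟨w, rfl⟩ := hi
      rw [hUe]
      exact (ediam_cyl _ _).trans (ENNReal.ofReal_le_ofReal hn)
    · rw [hnone i hi, hempty]
      exact bot_le
  unfold hausPre
  refine iInf_le_of_le U ?_
  refine iInf_le_of_le hcov ?_
  refine iInf_le_of_le hdiam ?_
  rw [← (Encodable.encode_injective (α := Fin n → Fin k)).tsum_eq]
  · rw [tsum_fintype]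
    have h1 : ∀ w : Fin n → Fin k, ediamD shiftDist (U (Encodable.encode w)) ^ s ≤
        ENNReal.ofReal (Real.exp (-(s * n))) := by
      intro w
      rw [hUe]
      refine (ENNReal.rpow_le_rpow (ediam_cyl _ _) hs.le).trans (le_of_eq ?_)
      rw [ENNReal.ofReal_rpow_of_pos (Real.exp_pos _), ← Real.exp_mul]
      congr 2
      ring
    refine (Finset.sum_le_sum fun w _ => h1 w).trans (le_of_eq ?_)
    simp only [Finset.sum_const, Finset.card_univ, Fintype.card_fun, Fintype.card_fin, nsmul_eq_mul]
    rw [← ENNReal.ofReal_natCast, ← ENNReal.ofReal_mul (by positivity), sub_eq_add_neg,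
      Real.exp_add, Real.exp_nat_mul, Real.exp_log (by exact_mod_cast hk)]
    push_cast
    rfl
  · intro i hi
    by_contra hi'
    apply hi
    simp only
    rw [hnone i hi', hempty, ENNReal.zero_rpow_of_pos hs]

lemma haus_eq (k : ℕ) (hk : 0 < k) :
    hausDim (shiftDist (k := k)) (Set.univ : Set (ℕ → Fin k)) =
        ENNReal.ofReal (Real.log k) := by
  have hlog : 0 ≤ Real.log k := Real.log_natCast_nonneg k
  apply le_antisymm
  · apply le_of_forall_gt_imp_ge_of_dense
    intro b hb
    obtain ⟨s, hs1, hs2⟩ := ENNReal.lt_iff_exists_nnreal_btwn.1 hb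
    refine le_trans ?_ hs2.le
    have hs : Real.log k < s := by
      rw [← ENNReal.ofReal_coe_nnreal] at hs1
      exact (ENNReal.ofReal_lt_ofReal_iff_of_nonneg hlog).1 hs1
    refine iInf₂_le_of_le s ?_ le_rfl
    refine le_antisymm (iSup₂_le fun δ hδ => ?_) bot_le
    apply ge_of_tendsto (tendsto_aux 0 (Real.log k - s) (by linarith))
    obtain ⟨c, hc⟩ := exists_c hδ
    filter_upwards [eventually_ge_atTop c] with n hn
    have hn' : Real.exp (-(n : ℝ)) ≤ δ := by
      refine le_trans (Real.exp_le_exp.2 ?_) hc.le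
      have : (c : ℝ) ≤ n := by exact_mod_cast hn
      linarith
    refine (hausPre_le hk (hlog.trans_lt hs) hn').trans (le_of_eq ?_)
    congr 2
    ring
  · rcases Nat.lt_or_ge k 2 with h2 | h2
    · have : k = 1 := by omega
      subst this
      simp
    refine le_iInf₂ fun s h => ?_
    by_contra hlt
    have hlt : (s : ℝ) < Real.log k := by
      have h3 := not_le.1 hlt
      rw [← ENNReal.ofReal_coe_nnreal] at h3
      exact (ENNReal.ofReal_lt_ofReal_iff_of_nonneg s.2).1 h3
    obtain ⟨μ, hμ1, hμ⟩ := exists_meas k hk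
    set A := ENNReal.ofReal (Real.exp (Real.log k)) with hA
    have hA0 : A ≠ 0 := by
      rw [hA]
      simp [Real.exp_pos]
    have hAt : A ≠ ⊤ := ENNReal.ofReal_ne_top
    have hbound : 1 ≤ A * hausPre shiftDist s 1 (univ : Set (ℕ → Fin k)) := by
      rw [mul_comm, ← ENNReal.div_le_iff hA0 hAt]
      refine le_iInf fun U => le_iInf fun hcov => le_iInf fun hU => ?_
      rw [ENNReal.div_le_iff hA0 hAt, mul_comm, ← ENNReal.tsum_mul_left, ← hμ1]
      refine (measure_mono hcov).trans ((measure_iUnion_le _).trans ?_)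
      refine ENNReal.tsum_le_tsum fun i => ?_
      refine (meas_le_diam h2 hμ1 hμ (U i)).trans ?_
      refine mul_le_mul_right ?_ _
      refine ENNReal.rpow_le_rpow_of_exponent_ge ?_ hlt.le
      simpa using hU i
    have h0 : hausPre shiftDist s 1 (univ : Set (ℕ → Fin k)) = 0 := by
      refine le_antisymm ?_ bot_le
      rw [← h]
      exact le_iSup₂_of_le (f := fun δ _ => hausPre shiftDist s δ (univ : Set (ℕ → Fin k)))
        1 one_pos le_rfl
    rw [h0] at hbound
    simp at hbound

end AlphaBS

/-- for the full one-sided shift on `k` symbols,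
`h_top^{α,B}(σ,Σ_k^+) = h_top^α(σ,Σ_k^+) = (1+α) log k` and `dim_H(Σ_k^+,d) = log k`. -/
theorem stmt16 (k : ℕ) (hk : 0 < k) (α : ℝ) (hα : 0 ≤ α) :
    entB (shiftDist (k := k)) (shiftMap k) α (Set.univ : Set (ℕ → Fin k)) =
        (((1 + α) * Real.log k : ℝ) : EReal) ∧
    htopSpan (shiftDist (k := k)) (shiftMap k) α = (((1 + α) * Real.log k : ℝ) : EReal) ∧
    hausDim (shiftDist (k := k)) (Set.univ : Set (ℕ → Fin k)) =
        ENNReal.ofReal (Real.log k) := by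
  exact ⟨entB_eq k hk α hα, htop_eq k hk α hα, haus_eq k hk⟩

end
end

section
/- Let (Σ_k^+, d, σ) be the full one-sided shift on k symbols and let μ be the uniform Bernoulli measure on Σ_k^+, i.e., the infinite product of the probability measure assigning mass 1/k to each of the k symbols. Then for every α ≥ 0 and every x ∈ Σ_k^+, P_μ^α(σ,x,1) = lim_{ε→0} liminf_{n→∞} (−log μ(B_n^α(x,ε)))/n ≥ (1+α)·log k; consequently P_μ^α(σ,1) = ∫ P_μ^α(σ,x,1) dμ(x) ≥ (1+α)·log k. -/
open Filter Set MeasureTheory ENNReal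
open scoped Classical NNReal

noncomputable section

open AlphaBS

theorem shiftMap_iterate (k i : ℕ) (x : ℕ → Fin k) (n : ℕ) :
    (shiftMap k)^[i] x n = x (n + i) := by
  induction i generalizing x with
  | zero => rfl
  | succ i ih =>
    rw [Function.iterate_succ_apply, ih]
    simp only [shiftMap]
    congr 1

theorem lt_of_shiftDist {k : ℕ} (α : ℝ) (x y : ℕ → Fin k) (i j : ℕ)
    (hxy : y (j + i) ≠ x (j + i))
    (h : Real.exp (α * i) * shiftDist ((shiftMap k)^[i] x) ((shiftMap k)^[i] y)
      < Real.exp (-(1 + α))) : α * i + 1 + α < j := by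
  have hne : (shiftMap k)^[i] x j ≠ (shiftMap k)^[i] y j := by
    rw [shiftMap_iterate, shiftMap_iterate]; exact hxy.symm
  have hne' : (shiftMap k)^[i] x ≠ (shiftMap k)^[i] y := fun e => hne (by rw [e])
  unfold shiftDist at h
  rw [if_neg hne', ← Real.exp_add, Real.exp_lt_exp] at h
  have h2 : sInf {n : ℕ | (shiftMap k)^[i] x n ≠ (shiftMap k)^[i] y n} ≤ j := Nat.sInf_le hne
  have h3 : ((sInf {n : ℕ | (shiftMap k)^[i] x n ≠ (shiftMap k)^[i] y n} : ℕ) : ℝ) ≤ j := by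
    exact_mod_cast h2
  linarith

theorem ball_subset {k : ℕ} (α : ℝ) (hα : 0 ≤ α) (x : ℕ → Fin k) (n : ℕ) (hn : 1 ≤ n) :
    bowenBall (shiftDist (k := k)) (shiftMap k) α n x (Real.exp (-(1 + α))) ⊆
      {y | ∀ i < ⌈(1 + α) * (n : ℝ)⌉₊, y i = x i} := by
  intro y hy j hj
  by_contra hne
  rw [Nat.lt_ceil] at hj
  rcases lt_or_ge j n with hjn | hjn
  · have := lt_of_shiftDist α x y j 0 (by simpa using hne) (hy j hjn)
    have h0 : 0 ≤ α * j := by positivity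
    push_cast at this
    linarith
  · obtain ⟨m, rfl⟩ : ∃ m, n = m + 1 := ⟨n - 1, by omega⟩
    obtain ⟨l, rfl⟩ : ∃ l, j = l + m := ⟨j - m, by omega⟩
    have := lt_of_shiftDist α x y m l hne (hy m (by omega))
    push_cast at hj
    nlinarith

theorem local_bound (k : ℕ) (hk : 0 < k) (μ : Measure (ℕ → Fin k))
    (hcyl : ∀ (x : ℕ → Fin k) (n : ℕ),
      μ {y | ∀ i < n, y i = x i} = ((k : ℝ≥0∞))⁻¹ ^ n)
    (α : ℝ) (hα : 0 ≤ α) (x : ℕ → Fin k) :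
    ENNReal.ofReal ((1 + α) * Real.log k) ≤
        localBKn (shiftDist (k := k)) (shiftMap k) α μ x := by
  unfold localBKn
  refine le_iSup₂_of_le (Real.exp (-(1 + α))) (Real.exp_pos _) ?_
  refine le_liminf_of_le (by isBoundedDefault) ?_
  filter_upwards [eventually_ge_atTop 1] with n hn
  have hn0 : (n : ℝ≥0∞) ≠ 0 := by simp; omega
  rw [ENNReal.le_div_iff_mul_le (Or.inl hn0) (Or.inl (ENNReal.natCast_ne_top n))]
  unfold negLog
  split_ifs with h0
  · exact le_top
  rw [← ENNReal.ofReal_natCast n, ← ENNReal.ofReal_mul' (Nat.cast_nonneg n)]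
  apply ENNReal.ofReal_le_ofReal
  have hle := (measure_mono (μ := μ) (ball_subset α hα x n hn)).trans_eq (hcyl x _)
  set B := μ (bowenBall (shiftDist (k := k)) (shiftMap k) α n x (Real.exp (-(1 + α))))
  set M := ⌈(1 + α) * (n : ℝ)⌉₊ with hM
  have hfin : ((k : ℝ≥0∞))⁻¹ ^ M ≠ ⊤ := by
    apply ENNReal.pow_ne_top
    simp; omega
  have hBpos : 0 < B.toReal := ENNReal.toReal_pos h0 (ne_top_of_le_ne_top hfin hle)
  have hle2 : B.toReal ≤ ((k : ℝ)⁻¹) ^ M := by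
    have := ENNReal.toReal_mono hfin hle
    simpa using this
  have hlog := Real.log_le_log hBpos hle2
  rw [Real.log_pow, Real.log_inv] at hlog
  have hk1 : 0 ≤ Real.log k := Real.log_natCast_nonneg k
  have hMle : (1 + α) * (n : ℝ) ≤ M := Nat.le_ceil _
  nlinarith [mul_le_mul_of_nonneg_right hMle hk1]

/-- for the uniform Bernoulli measure `μ` on the full shift,
`P_μ^α(σ,x,1) ≥ (1+α) log k` for every `x`, hence `P_μ^α(σ,1) ≥ (1+α) log k`. -/
theorem stmt17 (k : ℕ) (hk : 0 < k) (μ : Measure (ℕ → Fin k))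
    [IsProbabilityMeasure μ]
    (hcyl : ∀ (x : ℕ → Fin k) (n : ℕ),
      μ {y | ∀ i < n, y i = x i} = ((k : ℝ≥0∞))⁻¹ ^ n)
    (α : ℝ) (hα : 0 ≤ α) :
    (∀ x : ℕ → Fin k,
      ENNReal.ofReal ((1 + α) * Real.log k) ≤
        localBKn (shiftDist (k := k)) (shiftMap k) α μ x) ∧
    ENNReal.ofReal ((1 + α) * Real.log k) ≤
      BKn (shiftDist (k := k)) (shiftMap k) α μ := by
  have h := local_bound k hk μ hcyl α hα
  refine ⟨h, ?_⟩
  unfold BKn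
  calc ENNReal.ofReal ((1 + α) * Real.log k)
      = ∫⁻ _, ENNReal.ofReal ((1 + α) * Real.log k) ∂μ := by simp
    _ ≤ _ := lintegral_mono h

end
end
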